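/- Let m, p ≥ 1 be integers, d = gcd(p, m) and r = p/d. Then Coker s_p(X_m) ≅ ℤ^{d−1} ⊕ ℤ/rℤ if m is even; Coker s_p(X_m) ≅ ℤ^d if m is odd and p is even; and Coker s_p(X_m) ≅ (ℤ/2ℤ)^{d−1} if m is odd and p is odd. -/

import Mathlib

open Matrix Polynomial

/-- The `m × m` permutation matrix over `ℤ` of the cyclic permutation `(1,2,…,m)`:
its `(i,j)` entry is `1` iff `i ≡ j + 1 (mod m)`. -/
def cycMat (m : ℕ) : Matrix (Fin m) (Fin m) ℤ :=
  Matrix.of fun i j => if ((j : ℕ) + 1) % m = (i : ℕ) then 1 else 0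

/-- `X_m ^ p` for an integer exponent `p`, well defined since `X_m ^ m = 1`. -/
def cycMatZPow (m : ℕ) (p : ℤ) : Matrix (Fin m) (Fin m) ℤ :=
  cycMat m ^ (p % (m : ℤ)).toNat

/-- The cokernel `ℤ^m / A·ℤ^n` of an integer matrix. -/
abbrev coker {m n : Type} [Fintype m] [Fintype n] (A : Matrix m n ℤ) :=
  (m → ℤ) ⧸ LinearMap.range A.mulVecLin


/-- `s_p(A) = 1 - A + A² - ⋯ + (-1)^(p-1) A^(p-1)` for a square integer matrix `A`. -/
def sMat {n : Type} [Fintype n] [DecidableEq n] (p : ℕ) (A : Matrix n n ℤ) :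
    Matrix n n ℤ :=
  ∑ i ∈ Finset.range p, ((-1 : ℤ) ^ i) • A ^ i

/-! In `ℤ[x]/(x^m - (-1)^m)`, multiplication by `-x` permutes the basis `(-x)^i` cyclically, so
the cokernel of `s_p(X_m)` is `ℤ[x]/I` with `I = (x^m - (-1)^m, 1 + x + ⋯ + x^(p-1))`. Modulo `I`
one has `x^p = 1` and `x^m = ±1`, so `x^d` is a square root of `1`, where `d = gcd(p, m)`. Writing
`G = 1 + x + ⋯ + x^(d-1)`, it follows that `I` is `(G)(r, x - 1)` for even `m`, `(x^d + 1)` for odd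
`m` and even `p`, and `(2, G)` when both are odd. In the first case `ℤ[x]/I` is an extension of
`ℤ[x]/(G)` by `ℤ[x]/(r, x - 1)`, which splits because `ℤ[x]/(G)` is free. -/

section ProductIdeal

theorem nonempty_equiv_prod_of_exact {R A B C : Type*} [Ring R] [AddCommGroup A] [AddCommGroup B]
    [AddCommGroup C] [Module R A] [Module R B] [Module R C] [Module.Projective R C]
    {f : A →ₗ[R] B} {g : B →ₗ[R] C} (h : Function.Exact f g) (hf : Function.Injective f)
    (hg : Function.Surjective g) : Nonempty (B ≃ₗ[R] A × C) := by
  obtain ⟨l, hl⟩ := Module.projective_lifting_property g LinearMap.id hg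
  exact ⟨(h.splitSurjectiveEquiv hf ⟨l, hl⟩).1⟩

variable {S : Type*} [CommRing S]

theorem le_comap_mulLeft_span_mul (g : S) (J : Ideal S) :
    J ≤ Submodule.comap (LinearMap.mulLeft S g) (Ideal.span {g} * J) :=
  fun _ hx => Ideal.mul_mem_mul (Ideal.mem_span_singleton_self g) hx

/-- Multiplication by `g`, as a map `S ⧸ J → S ⧸ (g)J`. -/
def mulQuotient (g : S) (J : Ideal S) : (S ⧸ J) →ₗ[S] S ⧸ Ideal.span {g} * J :=
  Submodule.mapQ J (Ideal.span {g} * J) (LinearMap.mulLeft S g) (le_comap_mulLeft_span_mul g J)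

theorem mulQuotient_mk (g : S) (J : Ideal S) (x : S) :
    mulQuotient g J (Submodule.Quotient.mk x) = Submodule.Quotient.mk (g * x) := rfl

theorem mulQuotient_injective {g : S} (hg : IsLeftRegular g) (J : Ideal S) :
    Function.Injective (mulQuotient g J) := by
  rw [injective_iff_map_eq_zero]
  rintro x hx
  obtain ⟨x, rfl⟩ := Submodule.Quotient.mk_surjective _ x
  rw [mulQuotient_mk, Submodule.Quotient.mk_eq_zero, Ideal.mem_span_singleton_mul] at hx
  obtain ⟨z, hz, hgz⟩ := hx
  rw [Submodule.Quotient.mk_eq_zero]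
  exact hg hgz ▸ hz

theorem exact_mulQuotient_factor (g : S) (J : Ideal S) :
    Function.Exact (mulQuotient g J)
      (Submodule.factor (Ideal.mul_le_left : Ideal.span {g} * J ≤ Ideal.span {g})) := by
  have range_mulLeft : LinearMap.range (LinearMap.mulLeft S g) = Ideal.span {g} := by
    ext y
    simp [Ideal.mem_span_singleton', mul_comm]
  rw [LinearMap.exact_iff, mulQuotient, Submodule.range_mapQ, range_mulLeft, Submodule.factor,
    Submodule.mapQ, Submodule.ker_liftQ, LinearMap.comp_id, Submodule.ker_mkQ]

theorem nonempty_quotient_span_mul_equiv_prod (R : Type*) [CommRing R] [Algebra R S] {g : S}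
    (hg : IsLeftRegular g) [Module.Projective R (S ⧸ Ideal.span {g})] (J : Ideal S) :
    Nonempty ((S ⧸ Ideal.span {g} * J) ≃ₗ[R] (S ⧸ J) × (S ⧸ Ideal.span {g})) :=
  have hle : Ideal.span {g} * J ≤ Ideal.span {g} := Ideal.mul_le_left
  nonempty_equiv_prod_of_exact (f := (mulQuotient g J).restrictScalars R)
    (g := (Submodule.factor hle).restrictScalars R)
    (exact_mulQuotient_factor g J) (mulQuotient_injective hg J) (Submodule.factor_surjective hle)

end ProductIdeal

section PolynomialQuotients

variable {R S : Type*} [CommRing R] [CommRing S]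

/-- For surjective `f`, the quotient by `ker f + (a)` is the quotient of the target by `(f a)`. -/
noncomputable def quotientKerSupSpanEquiv {f : R →+* S} (hf : Function.Surjective f) (a : R) :
    R ⧸ RingHom.ker f ⊔ Ideal.span {a} ≃+* S ⧸ Ideal.span {f a} :=
  have ker_eq : RingHom.ker ((Ideal.Quotient.mk (Ideal.span {f a})).comp f) =
      RingHom.ker f ⊔ Ideal.span {a} := by
    rw [← RingHom.comap_ker, Ideal.mk_ker, ← Set.image_singleton, ← Ideal.map_span,
      Ideal.comap_map_of_surjective f hf, ← RingHom.ker_eq_comap_bot, sup_comm]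
  (Ideal.quotEquivOfEq ker_eq.symm).trans
    (RingHom.quotientKerEquivOfSurjective (Ideal.Quotient.mk_surjective.comp hf))

theorem natDegree_geom_sum_X [Nontrivial R] (d : ℕ) :
    (∑ i ∈ Finset.range d, (X : R[X]) ^ i).natDegree = d - 1 := by
  rcases eq_or_ne d 0 with rfl | hd
  · simp
  have h := congrArg natDegree (geom_sum_mul (X : R[X]) d)
  rw [← C_1, (monic_geom_sum_X hd).natDegree_mul (monic_X_sub_C 1), natDegree_X_sub_C,
    natDegree_X_pow_sub_C] at h
  omega

/-- The quotient of `R[X]` by a monic polynomial of degree `e` is free of rank `e`, on the powers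
of the root. -/
noncomputable def quotientSpanMonicEquiv {g : R[X]} (hg : g.Monic) {e : ℕ}
    (he : g.natDegree = e) : (R[X] ⧸ Ideal.span {g}) ≃ₗ[R] (Fin e → R) :=
  ((AdjoinRoot.powerBasis' hg).basis.reindex (finCongr he)).equivFun

theorem ker_mapRingHom_zmod_sup_span (n : ℕ) (g : ℤ[X]) :
    RingHom.ker (mapRingHom (Int.castRingHom (ZMod n))) ⊔ Ideal.span {g} =
      Ideal.span {(n : ℤ[X]), g} := by
  rw [ker_mapRingHom, ZMod.ker_intCastRingHom, Ideal.map_span, Ideal.span_insert]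
  simp

/-- `ℤ[X]/(n, g)` for monic `g` whose reduction modulo `n` has degree `e`; this is the degree of
`g` itself unless `n = 1`. -/
noncomputable def quotientNatMonicEquiv {n : ℕ} {g : ℤ[X]} (hg : g.Monic) {e : ℕ}
    (he : (g.map (Int.castRingHom (ZMod n))).natDegree = e) :
    (ℤ[X] ⧸ Ideal.span {(n : ℤ[X]), g}) ≃+ (Fin e → ZMod n) :=
  ((Ideal.quotEquivOfEq (ker_mapRingHom_zmod_sup_span n g).symm).trans
    (quotientKerSupSpanEquiv (map_surjective _ (ZMod.ringHom_surjective _)) g)).toAddEquiv.trans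
      (quotientSpanMonicEquiv (hg.map _) he).toAddEquiv

/-- Evaluation at `1` identifies `ℤ[X]/(n, X - 1)` with `ℤ/n`. -/
noncomputable def quotientNatXSubOneEquiv (n : ℕ) :
    (ℤ[X] ⧸ Ideal.span {(n : ℤ[X]), X - 1}) ≃+* ZMod n :=
  (Ideal.quotEquivOfEq (by simp)).trans
    ((quotientSpanCXSubCAlgEquiv (n : ℤ) 1).toRingEquiv.trans (Int.quotientSpanNatEquivZMod n))

theorem nonempty_quotient_geom_sum_mul_addEquiv {d : ℕ} (hd : d ≠ 0) (r : ℕ) :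
    Nonempty ((ℤ[X] ⧸ Ideal.span {∑ i ∈ Finset.range d, (X : ℤ[X]) ^ i} *
      Ideal.span {(r : ℤ[X]), X - 1}) ≃+ (Fin (d - 1) → ℤ) × ZMod r) := by
  have hG : (∑ i ∈ Finset.range d, (X : ℤ[X]) ^ i).Monic := monic_geom_sum_X hd
  have := hG.free_quotient
  obtain ⟨e⟩ := nonempty_quotient_span_mul_equiv_prod ℤ hG.isRegular.left
    (Ideal.span {(r : ℤ[X]), X - 1})
  exact ⟨e.toAddEquiv.trans (AddEquiv.prodComm.trans
    ((quotientSpanMonicEquiv hG (natDegree_geom_sum_X d)).toAddEquiv.prodCongr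
      (quotientNatXSubOneEquiv r).toAddEquiv))⟩

end PolynomialQuotients

section Relations

variable {R : Type*} [CommRing R] {x : R} {d k r : ℕ}

theorem geom_sum_mul_geom_sum_pow (x : R) (d r : ℕ) :
    (∑ i ∈ Finset.range d, x ^ i) * ∑ j ∈ Finset.range r, (x ^ d) ^ j =
      ∑ i ∈ Finset.range (d * r), x ^ i := by
  induction r with
  | zero => simp
  | succ r ih =>
    rw [Finset.sum_range_succ, mul_add, ih, mul_add_one, Finset.sum_range_add]
    simp only [pow_add, pow_mul, mul_comm (_ ^ r), ← Finset.sum_mul]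

theorem pow_eq_one_of_geom_sum_eq_zero {p : ℕ} (h : ∑ i ∈ Finset.range p, x ^ i = 0) :
    x ^ p = 1 := by
  rw [← sub_eq_zero, ← geom_sum_mul, h, zero_mul]

theorem geom_sum_mul_of_pow_eq_one (h : x ^ d = 1) (r : ℕ) :
    ∑ i ∈ Finset.range (d * r), x ^ i = (∑ i ∈ Finset.range d, x ^ i) * r := by
  simp [← geom_sum_mul_geom_sum_pow, h]

theorem pow_pow_gcd_two_eq_one (hrk : r.Coprime k) (hm : x ^ (d * k) = (-1) ^ (d * k))
    (hp : ∑ i ∈ Finset.range (d * r), x ^ i = 0) : (x ^ d) ^ r.gcd 2 = 1 := by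
  rw [← hrk.symm.gcd_mul_right_cancel_right 2, pow_gcd_eq_one, ← pow_mul, ← pow_mul]
  refine ⟨pow_eq_one_of_geom_sum_eq_zero hp, ?_⟩
  rw [mul_left_comm, mul_comm, pow_mul, hm, ← pow_mul, mul_comm, pow_mul, neg_one_sq, one_pow]

theorem relations_iff_of_even (hrk : r.Coprime k) (hm : Even (d * k)) :
    (x ^ (d * k) = (-1) ^ (d * k) ∧ ∑ i ∈ Finset.range (d * r), x ^ i = 0) ↔
      (∑ i ∈ Finset.range d, x ^ i) * r = 0 ∧ x ^ d = 1 := by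
  rw [hm.neg_one_pow]
  constructor
  · rintro ⟨hxm, hxp⟩
    have hxd : x ^ d = 1 := by
      rw [← pow_one (x ^ d), ← hrk.gcd_eq_one, pow_gcd_eq_one, ← pow_mul, ← pow_mul]
      exact ⟨pow_eq_one_of_geom_sum_eq_zero hxp, hxm⟩
    exact ⟨by rw [← geom_sum_mul_of_pow_eq_one hxd, hxp], hxd⟩
  · rintro ⟨hr, hxd⟩
    exact ⟨by rw [pow_mul, hxd, one_pow], by rw [geom_sum_mul_of_pow_eq_one hxd, hr]⟩

theorem relations_iff_of_odd_of_even (hrk : r.Coprime k) (hm : Odd (d * k)) (hp : Even (d * r)) :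
    (x ^ (d * k) = (-1) ^ (d * k) ∧ ∑ i ∈ Finset.range (d * r), x ^ i = 0) ↔ x ^ d = -1 := by
  obtain ⟨hd, hk⟩ := Nat.odd_mul.1 hm
  have hr : Even r := (Nat.even_mul.1 hp).resolve_left (Nat.not_even_iff_odd.2 hd)
  constructor
  · rintro ⟨hxm, hxp⟩
    have hxd_sq : (x ^ d) ^ 2 = 1 := by
      simpa only [Nat.gcd_eq_right hr.two_dvd] using pow_pow_gcd_two_eq_one hrk hxm hxp
    rwa [hm.neg_one_pow, pow_mul, pow_eq_pow_mod k hxd_sq, Nat.odd_iff.1 hk, pow_one] at hxm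
  · intro hxd
    refine ⟨by rw [pow_mul, hxd, pow_mul, hd.neg_one_pow], ?_⟩
    rw [← geom_sum_mul_geom_sum_pow, hxd, neg_one_geom_sum, if_pos hr, mul_zero]

theorem relations_iff_of_odd_of_odd (hrk : r.Coprime k) (hm : Odd (d * k)) (hp : Odd (d * r)) :
    (x ^ (d * k) = (-1) ^ (d * k) ∧ ∑ i ∈ Finset.range (d * r), x ^ i = 0) ↔
      (2 : R) = 0 ∧ ∑ i ∈ Finset.range d, x ^ i = 0 := by
  have hr : Odd r := (Nat.odd_mul.1 hp).2
  constructor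
  · rintro ⟨hxm, hxp⟩
    have hxd : x ^ d = 1 := by
      simpa only [hr.coprime_two_right.gcd_eq_one, pow_one] using
        pow_pow_gcd_two_eq_one hrk hxm hxp
    have two_eq_zero : (2 : R) = 0 := by
      rw [hm.neg_one_pow, pow_mul, hxd, one_pow] at hxm
      linear_combination hxm
    have cast_r : (r : R) = 1 := by
      obtain ⟨t, rfl⟩ := hr
      push_cast
      rw [two_eq_zero, zero_mul, zero_add]
    rw [geom_sum_mul_of_pow_eq_one hxd, cast_r, mul_one] at hxp
    exact ⟨two_eq_zero, hxp⟩
  · rintro ⟨two_eq_zero, hG⟩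
    have hxd := pow_eq_one_of_geom_sum_eq_zero hG
    refine ⟨?_, by rw [geom_sum_mul_of_pow_eq_one hxd, hG, zero_mul]⟩
    rw [hm.neg_one_pow, pow_mul, hxd, one_pow]
    linear_combination two_eq_zero

/-- The ideal `(x^m - (-1)^m, 1 + x + ⋯ + x^(p-1))`. For `x = X` in `ℤ[X]` its quotient is the
cokernel of `s_p(X_m)`, with `x` acting as `-X_m`. -/
def sIdeal (x : R) (m p : ℕ) : Ideal R :=
  Ideal.span {x ^ m - (-1) ^ m, ∑ i ∈ Finset.range p, x ^ i}

theorem sIdeal_le_iff (x : R) (m p : ℕ) (J : Ideal R) :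
    sIdeal x m p ≤ J ↔ Ideal.Quotient.mk J x ^ m = (-1) ^ m ∧
      ∑ i ∈ Finset.range p, Ideal.Quotient.mk J x ^ i = 0 := by
  simp [sIdeal, Ideal.span_le, Set.insert_subset_iff, ← Ideal.Quotient.eq_zero_iff_mem,
    sub_eq_zero]

theorem sIdeal_of_even (x : R) (hrk : r.Coprime k) (hm : Even (d * k)) :
    sIdeal x (d * k) (d * r) =
      Ideal.span {∑ i ∈ Finset.range d, x ^ i} * Ideal.span {(r : R), x - 1} := by
  refine eq_of_forall_ge_iff fun J => ?_
  rw [sIdeal_le_iff, relations_iff_of_even hrk hm, Ideal.span_mul_span']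
  simp [Ideal.span_le, Set.insert_subset_iff, ← Ideal.Quotient.eq_zero_iff_mem,
    sub_eq_zero, geom_sum_mul, Set.singleton_mul, Set.image_insert_eq]

theorem sIdeal_of_odd_of_even (x : R) (hrk : r.Coprime k) (hm : Odd (d * k))
    (hp : Even (d * r)) : sIdeal x (d * k) (d * r) = Ideal.span {x ^ d + 1} := by
  refine eq_of_forall_ge_iff fun J => ?_
  rw [sIdeal_le_iff, relations_iff_of_odd_of_even hrk hm hp]
  simp [Ideal.span_le, ← Ideal.Quotient.eq_zero_iff_mem, eq_neg_iff_add_eq_zero]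

theorem sIdeal_of_odd_of_odd (x : R) (hrk : r.Coprime k) (hm : Odd (d * k)) (hp : Odd (d * r)) :
    sIdeal x (d * k) (d * r) = Ideal.span {2, ∑ i ∈ Finset.range d, x ^ i} := by
  refine eq_of_forall_ge_iff fun J => ?_
  rw [sIdeal_le_iff, relations_iff_of_odd_of_odd hrk hm hp]
  have map_two : Ideal.Quotient.mk J 2 = 2 := map_ofNat (Ideal.Quotient.mk J) 2
  simp [Ideal.span_le, Set.insert_subset_iff, ← Ideal.Quotient.eq_zero_iff_mem, map_two]

end Relations

section CyclicMatrix

theorem sMat_neg {n : Type} [Fintype n] [DecidableEq n] (p : ℕ) (A : Matrix n n ℤ) :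
    sMat p (-A) = ∑ i ∈ Finset.range p, A ^ i :=
  Finset.sum_congr rfl fun i _ => by rw [← _root_.smul_pow, neg_one_smul, neg_neg]

theorem leftMulMatrix_eq_cycMat {S : Type*} [CommRing S] {m : ℕ}
    (b : Module.Basis (Fin m) ℤ S) {x : S} (hb : ∀ i, b i = x ^ (i : ℕ)) (hx : x ^ m = 1) :
    Algebra.leftMulMatrix b x = cycMat m := by
  ext i j
  have mul_basis : x * b j = b ⟨(j + 1) % m, Nat.mod_lt _ j.pos⟩ := by
    rw [hb, hb, ← pow_succ', pow_eq_pow_mod _ hx]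
  rw [Algebra.leftMulMatrix_eq_repr_mul, mul_basis, b.repr_self, Finsupp.single_apply]
  simp only [cycMat, of_apply, Fin.ext_iff]

/-- The polynomial `X^m - (-1)^m`, which annihilates the negative `-X_m` of the cyclic matrix. -/
noncomputable def negCycPoly (R : Type*) [CommRing R] (m : ℕ) : R[X] := X ^ m - C ((-1) ^ m)

variable (R : Type*) [CommRing R] {m : ℕ}

theorem monic_negCycPoly (hm : m ≠ 0) : (negCycPoly R m).Monic :=
  monic_X_pow_sub_C _ hm

theorem natDegree_negCycPoly [Nontrivial R] (m : ℕ) : (negCycPoly R m).natDegree = m :=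
  natDegree_X_pow_sub_C

theorem neg_root_negCycPoly_pow (m : ℕ) : (-AdjoinRoot.root (negCycPoly R m)) ^ m = 1 := by
  have root_pow : AdjoinRoot.root (negCycPoly R m) ^ m = (-1) ^ m := by
    have aeval_root : aeval (AdjoinRoot.root (negCycPoly R m)) (X ^ m - C ((-1 : R) ^ m)) = 0 :=
      (AdjoinRoot.aeval_eq _).trans AdjoinRoot.mk_self
    simpa [sub_eq_zero] using aeval_root
  rw [neg_pow, root_pow, ← mul_pow, neg_one_mul, neg_neg, one_pow]

/-- The basis `(-x)^i`, `i < m`, of `R[x]/(x^m - (-1)^m)`; the signs are there because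
multiplication by `-x` permutes it cyclically. -/
noncomputable def negRootBasis [Nontrivial R] (hm : m ≠ 0) :
    Module.Basis (Fin m) R (AdjoinRoot (negCycPoly R m)) :=
  ((AdjoinRoot.powerBasis' (monic_negCycPoly R hm)).basis.reindex
    (finCongr (natDegree_negCycPoly R m))).unitsSMul fun i => (-1) ^ (i : ℕ)

theorem negRootBasis_apply [Nontrivial R] (hm : m ≠ 0) (i : Fin m) :
    negRootBasis R hm i = (-AdjoinRoot.root (negCycPoly R m)) ^ (i : ℕ) := by
  rw [negRootBasis, Module.Basis.unitsSMul_apply, Module.Basis.reindex_apply,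
    PowerBasis.basis_eq_pow, neg_pow (AdjoinRoot.root _)]
  simp only [Units.smul_def, Units.val_pow_eq_pow_val, Units.val_neg, Units.val_one,
    Algebra.smul_def, map_pow, map_neg, map_one]
  rfl

end CyclicMatrix

section Cokernel

variable {R S n : Type*} [CommRing R] [CommRing S] [Algebra R S] [Fintype n] [DecidableEq n]

theorem map_equivFun_span_singleton (b : Module.Basis n R S) (x : S) :
    ((Ideal.span {x}).restrictScalars R).map (b.equivFun : S →ₗ[R] n → R) =
      LinearMap.range (Algebra.leftMulMatrix b x).mulVecLin := by
  have mulVec_equivFun (y : S) :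
      Algebra.leftMulMatrix b x *ᵥ b.equivFun y = b.equivFun (x * y) :=
    Algebra.leftMulMatrix_mulVec_repr b x y
  ext v
  simp only [Submodule.mem_map, Submodule.restrictScalars_mem, Ideal.mem_span_singleton,
    LinearEquiv.coe_coe, LinearMap.mem_range, mulVecLin_apply]
  rw [b.equivFun.surjective.exists]
  simp only [mulVec_equivFun]
  exact ⟨fun ⟨_, ⟨y, hy⟩, hv⟩ => ⟨y, hy ▸ hv⟩, fun ⟨y, hv⟩ => ⟨_, ⟨y, rfl⟩, hv⟩⟩

/-- In coordinates for a basis `b` of `S`, the quotient of `S` by the ideal `(x)` is the cokernel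
of the matrix of multiplication by `x`. -/
noncomputable def quotientSpanSingletonEquiv (b : Module.Basis n R S) (x : S) :
    (S ⧸ Ideal.span {x}) ≃ₗ[R]
      (n → R) ⧸ LinearMap.range (Algebra.leftMulMatrix b x).mulVecLin :=
  (Submodule.Quotient.restrictScalarsEquiv R (Ideal.span {x})).symm ≪≫ₗ
    Submodule.Quotient.equiv _ _ b.equivFun (map_equivFun_span_singleton b x)

theorem sMat_cycMat_eq_leftMulMatrix {m : ℕ} (hm : m ≠ 0) (p : ℕ) :
    sMat p (cycMat m) = Algebra.leftMulMatrix (negRootBasis ℤ hm)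
      (AdjoinRoot.mk (negCycPoly ℤ m) (∑ i ∈ Finset.range p, X ^ i)) := by
  rw [← leftMulMatrix_eq_cycMat (negRootBasis ℤ hm) (negRootBasis_apply ℤ hm)
    (neg_root_negCycPoly_pow ℤ m), map_neg, sMat_neg]
  simp only [map_sum, map_pow, AdjoinRoot.mk_X]
  rfl

theorem ker_adjoinRootMk_sup_span (m p : ℕ) :
    RingHom.ker (AdjoinRoot.mk (negCycPoly R m)) ⊔
      Ideal.span {∑ i ∈ Finset.range p, (X : R[X]) ^ i} = sIdeal X m p := by
  have ker_mk : RingHom.ker (AdjoinRoot.mk (negCycPoly R m)) = Ideal.span {negCycPoly R m} :=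
    Ideal.mk_ker
  rw [ker_mk, ← Ideal.span_insert]
  simp [sIdeal, negCycPoly]

/-- The cokernel of `s_p(X_m)` is `ℤ[X]/(X^m - (-1)^m, 1 + X + ⋯ + X^(p-1))`, with `X` acting as
`-X_m`. -/
noncomputable def cokerSMatCycMatEquiv {m : ℕ} (hm : m ≠ 0) (p : ℕ) :
    coker (sMat p (cycMat m)) ≃+ ℤ[X] ⧸ sIdeal (X : ℤ[X]) m p :=
  ((Submodule.quotEquivOfEq _ _ (by rw [sMat_cycMat_eq_leftMulMatrix hm])).trans
    (quotientSpanSingletonEquiv (negRootBasis ℤ hm)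
      (AdjoinRoot.mk _ (∑ i ∈ Finset.range p, X ^ i))).symm).toAddEquiv.trans
    ((quotientKerSupSpanEquiv AdjoinRoot.mk_surjective _).symm.trans
      (Ideal.quotEquivOfEq (ker_adjoinRootMk_sup_span m p))).toAddEquiv

end Cokernel

theorem stmt_9 (m p : ℕ) (hm : 1 ≤ m) (hp : 1 ≤ p) (d r : ℕ)
    (hd : d = Nat.gcd p m) (hr : r = p / d) :
    (Even m → Nonempty (coker (sMat p (cycMat m)) ≃+ ((Fin (d - 1) → ℤ) × ZMod r))) ∧
    (Odd m → Even p → Nonempty (coker (sMat p (cycMat m)) ≃+ (Fin d → ℤ))) ∧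
    (Odd m → Odd p → Nonempty (coker (sMat p (cycMat m)) ≃+ (Fin (d - 1) → ZMod 2))) := by
  have hm0 : m ≠ 0 := Nat.one_le_iff_ne_zero.1 hm
  have hd0 : d ≠ 0 := hd ▸ Nat.gcd_ne_zero_right hm0
  obtain ⟨r', k, hrk, hpr, hmk⟩ := Nat.exists_coprime p m
  rw [← hd, mul_comm] at hpr hmk
  obtain rfl : r = r' := by rw [hr, hpr, Nat.mul_div_cancel_left _ (Nat.pos_of_ne_zero hd0)]
  have coker_equiv {I : Ideal ℤ[X]} (hI : sIdeal X (d * k) (d * r) = I) :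
      coker (sMat p (cycMat m)) ≃+ ℤ[X] ⧸ I :=
    (cokerSMatCycMatEquiv hm0 p).trans (Ideal.quotEquivOfEq (by rw [hpr, hmk, hI])).toAddEquiv
  clear hr
  subst hpr hmk
  refine ⟨fun hm => ?_, fun hm hp => ⟨?_⟩, fun hm hp => ⟨?_⟩⟩
  · obtain ⟨e⟩ := nonempty_quotient_geom_sum_mul_addEquiv hd0 r
    exact ⟨(coker_equiv (sIdeal_of_even X hrk hm)).trans e⟩
  · exact (coker_equiv (sIdeal_of_odd_of_even X hrk hm hp)).trans
      (quotientSpanMonicEquiv (monic_X_pow_add_C 1 hd0) natDegree_X_pow_add_C).toAddEquiv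
  · exact (coker_equiv (sIdeal_of_odd_of_odd X hrk hm hp)).trans
      (quotientNatMonicEquiv (n := 2) (monic_geom_sum_X hd0) (by
        simp only [Polynomial.map_sum, Polynomial.map_pow, map_X, natDegree_geom_sum_X]))
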